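/- Let E be a real inner product space, Y ⊆ E a nonempty convex set, S ⊆ Y a nonempty convex set, and F : E → E monotone on Y. Let α > 0 and constants w₁, w₄, ζ > 0. Let x_k ∈ Y, u_k ∈ Y, G_k, G_{k+1} ∈ E; let u_{k+1} be a projection of x_k − α·G_k onto Y and v_{k+1} a projection of x_k − α·G_{k+1} onto Y; set b̄_k = F(u_k) − G_k and b̄_{k+1} = F(u_{k+1}) − G_{k+1}; let p_k be a projection of x_k onto S. Then for all x ∈ Y: 2α⟨F(x), p_k − x⟩ ≤ ‖x_k − x‖² − ‖v_{k+1} − x‖² − (1−w₁)‖v_{k+1} − u_{k+1}‖² − (1−w₄)‖x_k − u_{k+1}‖² + 2α⟨b̄_{k+1}, u_{k+1} − x⟩ + (1/ζ + 1/w₄)·‖F(x)‖²·α² + (2/w₁)(‖b̄_{k+1}‖² + ‖b̄_k‖²)·α² + 2α·‖F(u_k) − F(u_{k+1})‖·‖v_{k+1} − u_{k+1}‖ + ζ·‖x_k − p_k‖². -/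

import Mathlib

open RealInnerProductSpace in
lemma young_aux {E : Type*} [NormedAddCommGroup E] [InnerProductSpace ℝ E]
    (α w : ℝ) (hw : 0 < w) (a b : E) :
    2 * α * ⟪a, b⟫ ≤ 1 / w * ‖a‖ ^ 2 * α ^ 2 + w * ‖b‖ ^ 2 := by
  have h : 0 ≤ ‖α • a - w • b‖ ^ 2 := sq_nonneg _
  rw [norm_sub_sq_real, norm_smul, norm_smul, mul_pow, mul_pow, real_inner_smul_left,
    real_inner_smul_right, Real.norm_eq_abs, Real.norm_eq_abs, sq_abs, sq_abs] at h
  have e : 1 / w * ‖a‖ ^ 2 * α ^ 2 + w * ‖b‖ ^ 2 - 2 * α * ⟪a, b⟫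
      = (α ^ 2 * ‖a‖ ^ 2 - 2 * (α * (w * ⟪a, b⟫)) + w ^ 2 * ‖b‖ ^ 2) / w := by
    field_simp
    ring
  have := div_nonneg h hw.le
  linarith

open RealInnerProductSpace in
/-- Lemma `lem_Popov1`: one iteration of the modified stochastic Popov method, with
`b̄_k = F(u_k) − G_k`, `b̄_{k+1} = F(u_{k+1}) − G_{k+1}` and `p_k` the projection of `x_k`
onto `S`. -/
theorem stmt_11 {E : Type*} [NormedAddCommGroup E] [InnerProductSpace ℝ E]
    (Y : Set E) (hYne : Y.Nonempty) (hYconv : Convex ℝ Y)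
    (S : Set E) (hSY : S ⊆ Y) (hSne : S.Nonempty) (hSconv : Convex ℝ S)
    (F : E → E)
    (hmono : ∀ x ∈ Y, ∀ y ∈ Y, 0 ≤ ⟪F x - F y, x - y⟫)
    (α : ℝ) (hα : 0 < α)
    (w₁ w₄ ζ : ℝ) (hw₁ : 0 < w₁) (hw₄ : 0 < w₄) (hζ : 0 < ζ)
    (xk : E) (hxk : xk ∈ Y)
    (uk : E) (huk : uk ∈ Y)
    (Gk Gk1 : E)
    (uk1 : E) (huk1 : uk1 ∈ Y)
    (huk1proj : ∀ y ∈ Y, ⟪xk - α • Gk - uk1, y - uk1⟫ ≤ 0)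
    (vk1 : E) (hvk1 : vk1 ∈ Y)
    (hvk1proj : ∀ y ∈ Y, ⟪xk - α • Gk1 - vk1, y - vk1⟫ ≤ 0)
    (pk : E) (hpk : pk ∈ S) (hpkproj : ∀ y ∈ S, ⟪xk - pk, y - pk⟫ ≤ 0)
    (x : E) (hx : x ∈ Y) :
    2 * α * ⟪F x, pk - x⟫
      ≤ ‖xk - x‖ ^ 2 - ‖vk1 - x‖ ^ 2
        - (1 - w₁) * ‖vk1 - uk1‖ ^ 2
        - (1 - w₄) * ‖xk - uk1‖ ^ 2
        + 2 * α * ⟪F uk1 - Gk1, uk1 - x⟫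
        + (1 / ζ + 1 / w₄) * ‖F x‖ ^ 2 * α ^ 2
        + (2 * ‖F uk1 - Gk1‖ ^ 2 / w₁ + 2 * ‖F uk - Gk‖ ^ 2 / w₁) * α ^ 2
        + 2 * α * ‖F uk - F uk1‖ * ‖vk1 - uk1‖
        + ζ * ‖xk - pk‖ ^ 2 := by
  have h1 := hvk1proj x hx
  have h2 := huk1proj vk1 hvk1
  have h3 := hmono uk1 huk1 x hx
  have y1 := young_aux α ζ hζ (F x) (pk - xk)
  have y2 := young_aux α w₄ hw₄ (F x) (xk - uk1)
  have y3 := young_aux α w₁ hw₁ ((F uk1 - Gk1) - (F uk - Gk)) (vk1 - uk1)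
  have c := mul_le_mul_of_nonneg_left (real_inner_le_norm (F uk - F uk1) (vk1 - uk1))
    (by positivity : 0 ≤ 2 * α)
  have par : ‖(F uk1 - Gk1) - (F uk - Gk)‖ ^ 2
      ≤ 2 * ‖F uk1 - Gk1‖ ^ 2 + 2 * ‖F uk - Gk‖ ^ 2 := by
    have := parallelogram_law_with_norm ℝ (F uk1 - Gk1) (F uk - Gk)
    nlinarith [mul_self_nonneg ‖(F uk1 - Gk1) + (F uk - Gk)‖]
  have y4 : 1 / w₁ * ‖(F uk1 - Gk1) - (F uk - Gk)‖ ^ 2 * α ^ 2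
      ≤ (2 * ‖F uk1 - Gk1‖ ^ 2 / w₁ + 2 * ‖F uk - Gk‖ ^ 2 / w₁) * α ^ 2 := by
    have : (2 * ‖F uk1 - Gk1‖ ^ 2 / w₁ + 2 * ‖F uk - Gk‖ ^ 2 / w₁)
        = 1 / w₁ * (2 * ‖F uk1 - Gk1‖ ^ 2 + 2 * ‖F uk - Gk‖ ^ 2) := by ring
    rw [this]
    gcongr
  have h3' := mul_nonneg (by positivity : 0 ≤ 2 * α) h3
  rw [norm_sub_rev pk xk] at y1
  have key : ‖vk1 - x‖ ^ 2 = ‖xk - x‖ ^ 2 - ‖xk - uk1‖ ^ 2 - ‖vk1 - uk1‖ ^ 2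
      + 2 * ⟪xk - α • Gk1 - vk1, x - vk1⟫ + 2 * ⟪xk - α • Gk - uk1, vk1 - uk1⟫
      + 2 * α * ⟪F uk - F uk1, vk1 - uk1⟫
      + 2 * α * ⟪(F uk1 - Gk1) - (F uk - Gk), vk1 - uk1⟫
      + 2 * α * ⟪F uk1 - Gk1, uk1 - x⟫ - 2 * α * ⟪F uk1 - F x, uk1 - x⟫
      - 2 * α * ⟪F x, pk - x⟫ + 2 * α * ⟪F x, pk - xk⟫ + 2 * α * ⟪F x, xk - uk1⟫ := by
    simp only [← real_inner_self_eq_norm_sq, inner_sub_left, inner_sub_right,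
      real_inner_smul_left]
    rw [real_inner_comm x vk1, real_inner_comm x xk, real_inner_comm uk1 xk,
      real_inner_comm uk1 vk1, real_inner_comm vk1 xk]
    ring
  linarith
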